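/- Consider the linear model Y_t = x_tᵀβ + ε_t, t = 1,…,T, with deterministic x_t ∈ ℝ^p forming the T×p design matrix X, and real random errors ε_t such that for some C > 0, for every j ∈ {1,…,p} and x ≥ 0: P(|Σ_{t=1}^T x_{tj} ε_t| > x) ≤ 2·exp(−C·x²/(T + x·(log T)²)). Fix α ∈ (0,1), set λ = 2·C^{−1/2}·√(log(2p/α)·(p/T + √p·(log T)²/T)), and assume λ ≤ 2. Let β̂^{(ℓ_s)} be a minimizer of b ↦ (1/T)·‖Y − Xb‖₂² + λ·‖b‖_s for some 1 ≤ s ≤ 2. Then with probability at least 1 − α: (1/T)·‖X(β̂^{(ℓ_s)} − β)‖₂² ≤ 2λ·‖β‖_s. -/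

import Mathlib

/-!
Write `δ = β̂ - β` and `Z_j = ∑ t, X t j * ε t`. Comparing the objective at `β̂` and at `β` gives the
basic inequality `(1/T)‖Xδ‖² ≤ (2/T)⟨Z, δ⟩ + λ(‖β‖_s - ‖β̂‖_s)`. If every `|Z_j|` is at most
`u = λT / (2√p)`, then `⟨Z, δ⟩ ≤ u‖δ‖₁ ≤ u√p‖δ‖_s = (λT/2)‖δ‖_s`, using the power mean inequality
`‖δ‖₁ ≤ p^(1 - 1/s)‖δ‖_s` (`sum_abs_le_sqrt_mul_lsNorm`), and the triangle inequality for `‖·‖_s`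
yields the claim (`mspe_le_of_noise_le`).

The choice of `λ`, together with `λ ≤ 2`, makes the Bernstein exponent at `u` at least
`log (2p/α)` (`bernstein_exponent_ge`), so that each event `|Z_j| > u` has probability at most
`α/p`, and a union bound concludes. No measurability of `β̂` or `ε` is required, since only
subadditivity of the outer measure is used.
-/

open MeasureTheory Matrix

/-- The Euclidean norm on `Fin n → ℝ`. -/
noncomputable def euclNorm {n : ℕ} (v : Fin n → ℝ) : ℝ :=
  ‖(EuclideanSpace.equiv (Fin n) ℝ).symm v‖

/-- The `ℓ_s`-norm on `Fin n → ℝ`. -/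
noncomputable def lsNorm {n : ℕ} (s : ℝ) (v : Fin n → ℝ) : ℝ :=
  (∑ j, |v j| ^ s) ^ (1 / s)

lemma euclNorm_sq {n : ℕ} (v : Fin n → ℝ) : euclNorm v ^ 2 = ∑ i, v i ^ 2 := by
  simp [euclNorm, EuclideanSpace.norm_sq_eq]

lemma lsNorm_nonneg {n : ℕ} (s : ℝ) (v : Fin n → ℝ) : 0 ≤ lsNorm s v := by
  unfold lsNorm
  positivity

lemma lsNorm_sub_le {n : ℕ} {s : ℝ} (hs : 1 ≤ s) (v w : Fin n → ℝ) :
    lsNorm s (v - w) ≤ lsNorm s v + lsNorm s w := by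
  have h := Real.Lp_add_le Finset.univ v (-w) hs
  simpa [lsNorm, sub_eq_add_neg] using h

/-- For `1 ≤ s ≤ 2` the `ℓ₁`-norm is at most `√n` times the `ℓ_s`-norm: the power mean inequality
gives the factor `n ^ (1 - 1 / s)`, whose exponent is at most `1 / 2`. -/
lemma sum_abs_le_sqrt_mul_lsNorm {n : ℕ} {s : ℝ} (hs1 : 1 ≤ s) (hs2 : s ≤ 2) (v : Fin n → ℝ) :
    ∑ j, |v j| ≤ √n * lsNorm s v := by
  rcases Nat.eq_zero_or_pos n with rfl | hn
  · simp
  have hs0 : 0 < s := by linarith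
  have hn1 : (1 : ℝ) ≤ n := by exact_mod_cast hn
  have h := Real.rpow_sum_le_const_mul_sum_rpow Finset.univ v hs1
  rw [Finset.card_univ, Fintype.card_fin] at h
  have hA : 0 ≤ ∑ j, |v j| := by positivity
  have h2 := Real.rpow_le_rpow (by positivity) h (by positivity : 0 ≤ 1 / s)
  rw [← Real.rpow_mul hA, mul_one_div_cancel hs0.ne', Real.rpow_one,
    Real.mul_rpow (by positivity) (by positivity), ← Real.rpow_mul (by positivity)] at h2
  refine h2.trans ?_
  unfold lsNorm
  rw [Real.sqrt_eq_rpow]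
  gcongr
  rw [mul_one_div, div_le_div_iff₀ hs0 two_pos]
  linarith

/-- The deterministic part of the argument: on the event that all noise coordinates are at most `u`,
where `2 * u * √p ≤ λ T`, the prediction error bound holds. -/
lemma mspe_le_of_noise_le {T p : ℕ} (hT : 0 < T) (X : Matrix (Fin T) (Fin p) ℝ)
    (β b : Fin p → ℝ) (e : Fin T → ℝ) {lam u s : ℝ} (hs1 : 1 ≤ s) (hs2 : s ≤ 2)
    (hlam : 0 ≤ lam) (hu0 : 0 ≤ u) (hu : 2 * (u * √p) ≤ lam * T)
    (hZ : ∀ j, |∑ t, X t j * e t| ≤ u)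
    (hmin : (1 / (T : ℝ)) * euclNorm (X.mulVec β + e - X.mulVec b) ^ 2 + lam * lsNorm s b
      ≤ (1 / (T : ℝ)) * euclNorm (X.mulVec β + e - X.mulVec β) ^ 2 + lam * lsNorm s β) :
    (1 / (T : ℝ)) * euclNorm (X.mulVec (b - β)) ^ 2 ≤ 2 * lam * lsNorm s β := by
  have hT' : (0 : ℝ) < T := by exact_mod_cast hT
  have e1 : X.mulVec β + e - X.mulVec b = e - X.mulVec (b - β) := by
    rw [Matrix.mulVec_sub]; abel
  have e2 : X.mulVec β + e - X.mulVec β = e := by abel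
  rw [e1, e2] at hmin
  have hexpand : euclNorm (e - X.mulVec (b - β)) ^ 2 = euclNorm e ^ 2
      - 2 * ∑ t, e t * X.mulVec (b - β) t + euclNorm (X.mulVec (b - β)) ^ 2 := by
    simp only [euclNorm_sq, Finset.mul_sum, ← Finset.sum_sub_distrib, ← Finset.sum_add_distrib]
    refine Finset.sum_congr rfl fun t _ => ?_
    simp only [Pi.sub_apply]
    ring
  have hswap : ∑ t, e t * X.mulVec (b - β) t = ∑ j, (∑ t, X t j * e t) * (b - β) j := by
    simp only [Matrix.mulVec, dotProduct, Finset.mul_sum, Finset.sum_mul]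
    rw [Finset.sum_comm]
    refine Finset.sum_congr rfl fun j _ => Finset.sum_congr rfl fun t _ => ?_
    ring
  have hcross : ∑ t, e t * X.mulVec (b - β) t ≤ u * ∑ j, |(b - β) j| := by
    rw [hswap, Finset.mul_sum]
    refine Finset.sum_le_sum fun j _ => (le_abs_self _).trans ?_
    rw [abs_mul]
    exact mul_le_mul_of_nonneg_right (hZ j) (abs_nonneg _)
  have hnorm : 2 * ∑ t, e t * X.mulVec (b - β) t
      ≤ lam * T * (lsNorm s b + lsNorm s β) := by
    calc 2 * ∑ t, e t * X.mulVec (b - β) t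
        ≤ 2 * (u * (√p * lsNorm s (b - β))) := by
          have := mul_le_mul_of_nonneg_left (sum_abs_le_sqrt_mul_lsNorm hs1 hs2 (b - β)) hu0
          linarith
      _ = 2 * (u * √p) * lsNorm s (b - β) := by ring
      _ ≤ lam * T * (lsNorm s b + lsNorm s β) :=
          mul_le_mul hu (lsNorm_sub_le hs1 b β) (lsNorm_nonneg _ _) (by positivity)
  rw [hexpand] at hmin
  have hdiv : (1 / (T : ℝ)) * (2 * ∑ t, e t * X.mulVec (b - β) t)
      ≤ lam * (lsNorm s b + lsNorm s β) := by
    rw [one_div, inv_mul_le_iff₀ hT']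
    linarith
  linarith

/-- With `λ² = 4 C⁻¹ L (p/T + √p ℓ/T)` and `λ ≤ 2`, the Bernstein exponent at `u = λT/(2√p)` is at
least `L`: here `C u² = L (T + T ℓ/√p)`, while `u ≤ T/√p` bounds the denominator by
`T + T ℓ/√p`. -/
lemma bernstein_exponent_ge {T p C L l lam : ℝ} (hT : 0 < T) (hp : 0 < p) (hC : 0 < C)
    (hL : 0 ≤ L) (hl : 0 ≤ l) (hlam0 : 0 ≤ lam)
    (hlam : lam ^ 2 = 4 * C⁻¹ * (L * (p / T + √p * l / T))) (hlam2 : lam ≤ 2) :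
    L ≤ C * (lam * T / (2 * √p)) ^ 2 / (T + lam * T / (2 * √p) * l) := by
  have hq : 0 < √p := Real.sqrt_pos.mpr hp
  have hqq : √p ^ 2 = p := Real.sq_sqrt hp.le
  rw [le_div_iff₀ (by positivity)]
  have hsq : C * (lam * T / (2 * √p)) ^ 2 = L * (T + T / √p * l) := by
    rw [div_pow, mul_pow, hlam, ← hqq, Real.sqrt_sq hq.le]
    field_simp
    ring
  rw [hsq]
  have hu : lam * T / (2 * √p) ≤ T / √p := by
    rw [div_le_div_iff₀ (by positivity) hq]
    nlinarith [mul_pos hT hq]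
  gcongr

/-- Sample prediction error bound for `ℓ_s`-penalized least squares
under geometric weak dependence: with the stated choice of `λ`, with probability at
least `1 − α`, `(1/T)·‖X(β̂^{(ℓ_s)} − β)‖₂² ≤ 2λ·‖β‖_s`. -/
theorem penalized_ls_mspe_bound_geometric
    {Ω : Type*} [MeasurableSpace Ω] (P : Measure Ω) [IsProbabilityMeasure P]
    (T p : ℕ) (X : Matrix (Fin T) (Fin p) ℝ)
    (β : Fin p → ℝ) (ε : Ω → Fin T → ℝ)
    (C : ℝ) (hC : 0 < C)
    (hexp : ∀ j : Fin p, ∀ u : ℝ, 0 ≤ u →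
      P {ω | u < |∑ t, X t j * ε ω t|}
        ≤ ENNReal.ofReal
            (2 * Real.exp (-(C * u ^ 2) / ((T : ℝ) + u * Real.log T ^ 2))))
    (α : ℝ) (hα0 : 0 < α) (hα1 : α < 1)
    (lam : ℝ)
    (hlamdef : lam = 2 * C ^ (-(1 : ℝ) / 2) *
      Real.sqrt (Real.log (2 * (p : ℝ) / α) *
        ((p : ℝ) / T + Real.sqrt p * Real.log T ^ 2 / T)))
    (hlam2 : lam ≤ 2)
    (Y : Ω → Fin T → ℝ) (hY : ∀ ω, Y ω = X.mulVec β + ε ω)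
    (s : ℝ) (hs1 : 1 ≤ s) (hs2 : s ≤ 2)
    (βhat : Ω → Fin p → ℝ)
    (hmin : ∀ ω, ∀ b : Fin p → ℝ,
      (1 / (T : ℝ)) * euclNorm (Y ω - X.mulVec (βhat ω)) ^ 2 + lam * lsNorm s (βhat ω)
        ≤ (1 / (T : ℝ)) * euclNorm (Y ω - X.mulVec b) ^ 2 + lam * lsNorm s b) :
    1 - ENNReal.ofReal α
      ≤ P {ω | (1 / (T : ℝ)) * euclNorm (X.mulVec (βhat ω - β)) ^ 2
            ≤ 2 * lam * lsNorm s β} := by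
  have hlam0 : 0 ≤ lam := by rw [hlamdef]; positivity
  rcases Nat.eq_zero_or_pos T with rfl | hT
  -- For `T = 0` the factor `1 / T` is `0`, so the error bound holds everywhere.
  · have : ∀ ω, (1 / ((0 : ℕ) : ℝ)) * euclNorm (X.mulVec (βhat ω - β)) ^ 2
        ≤ 2 * lam * lsNorm s β := fun ω => by
      have := lsNorm_nonneg s β
      simp only [Nat.cast_zero, div_zero, zero_mul]
      positivity
    simp only [this, Set.ofPred_true, measure_univ]
    exact tsub_le_self
  have hT' : (0 : ℝ) < T := by exact_mod_cast hT
  set u : ℝ := lam * T / (2 * √p) with hudef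
  have hu0 : 0 ≤ u := by positivity
  -- An inequality rather than an equality, so that `p = 0` is covered.
  have hu : 2 * (u * √p) ≤ lam * T := by
    rcases Nat.eq_zero_or_pos p with hp | hp
    · simp only [hp, Nat.cast_zero, Real.sqrt_zero, mul_zero]
      positivity
    · have : 0 < √(p : ℝ) := Real.sqrt_pos.mpr (by exact_mod_cast hp)
      rw [hudef]
      exact le_of_eq (by field_simp)
  set good : Set Ω := {ω | (1 / (T : ℝ)) * euclNorm (X.mulVec (βhat ω - β)) ^ 2
            ≤ 2 * lam * lsNorm s β} with hgood
  have hcover : (Set.univ : Set Ω) ⊆ good ∪ ⋃ j, {ω | u < |∑ t, X t j * ε ω t|} := by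
    intro ω _
    by_cases h : ∃ j, u < |∑ t, X t j * ε ω t|
    · exact Or.inr (Set.mem_iUnion.mpr h)
    · push Not at h
      refine Or.inl ?_
      have hm := hmin ω β
      rw [hY ω] at hm
      exact mspe_le_of_noise_le hT X β (βhat ω) (ε ω) hs1 hs2 hlam0 hu0 hu h hm
  have htail : ∀ j : Fin p, P {ω | u < |∑ t, X t j * ε ω t|} ≤ ENNReal.ofReal (α / p) := by
    intro j
    have hp1 : (1 : ℝ) ≤ p := by exact_mod_cast (Nat.succ_le_of_lt (Fin.pos j))
    have hp0 : (0 : ℝ) < p := by linarith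
    have hL : 0 ≤ Real.log (2 * (p : ℝ) / α) :=
      Real.log_nonneg (by rw [le_div_iff₀ hα0]; linarith)
    have hsq : lam ^ 2 = 4 * C⁻¹ * (Real.log (2 * (p : ℝ) / α) *
        ((p : ℝ) / T + √p * Real.log T ^ 2 / T)) := by
      rw [hlamdef, mul_pow, mul_pow, Real.sq_sqrt (by positivity), ← Real.rpow_natCast (C ^ _),
        ← Real.rpow_mul hC.le]
      norm_num [Real.rpow_neg_one]
    have hE := bernstein_exponent_ge hT' hp0 hC hL (sq_nonneg (Real.log T)) hlam0 hsq hlam2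
    refine (hexp j u hu0).trans (ENNReal.ofReal_le_ofReal ?_)
    calc 2 * Real.exp (-(C * u ^ 2) / ((T : ℝ) + u * Real.log T ^ 2))
        ≤ 2 * Real.exp (-Real.log (2 * (p : ℝ) / α)) := by
          gcongr
          rw [neg_div]
          exact neg_le_neg hE
      _ = α / p := by
          rw [Real.exp_neg, Real.exp_log (by positivity)]
          field_simp
  have hbad : P (⋃ j, {ω | u < |∑ t, X t j * ε ω t|}) ≤ ENNReal.ofReal α := by
    calc P (⋃ j, {ω | u < |∑ t, X t j * ε ω t|})
        ≤ ∑ j, P {ω | u < |∑ t, X t j * ε ω t|} := measure_iUnion_fintype_le _ _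
      _ ≤ ∑ _j : Fin p, ENNReal.ofReal (α / p) := Finset.sum_le_sum fun j _ => htail j
      _ = ENNReal.ofReal (p * (α / p)) := by
          rw [ENNReal.ofReal_mul (by positivity)]
          simp
      _ ≤ ENNReal.ofReal α := by
          apply ENNReal.ofReal_le_ofReal
          rcases Nat.eq_zero_or_pos p with hp | hp
          · simp [hp, hα0.le]
          · have : (0 : ℝ) < p := by exact_mod_cast hp
            exact le_of_eq (by field_simp)
  rw [tsub_le_iff_right]
  calc (1 : ENNReal) = P Set.univ := measure_univ.symm
    _ ≤ P (good ∪ ⋃ j, {ω | u < |∑ t, X t j * ε ω t|}) := measure_mono hcover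
    _ ≤ P good + P (⋃ j, {ω | u < |∑ t, X t j * ε ω t|}) := measure_union_le _ _
    _ ≤ P good + ENNReal.ofReal α := by gcongr
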